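/- With the fusion weight λ_1 = ε, so that p_1^s = ε·p_o + (1−ε)·p_1 = (2ε(1−ε), ε² + (1−ε)²), the symmetric cross-entropy dissimilarity between the sponsored answer of advertiser 1 and the organic answer satisfies lim_{ε→0⁺} [CE(p_1^s‖p_o) + CE(p_o‖p_1^s) + 2·log ε + log 2] = 0 (equivalently, the user utility S(p_1^s, p_o) equals 2A + 2·log ε + log 2 up to a term vanishing as ε → 0⁺). -/

import Mathlib

/-- Cross entropy between two distributions over a two-token vocabulary. -/
noncomputable def CE (p q : ℝ × ℝ) : ℝ := -(p.1 * Real.log q.1 + p.2 * Real.log q.2)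

/-- Similarity based on symmetric cross entropy, with constant `A`. -/
noncomputable def Sim (A : ℝ) (p q : ℝ × ℝ) : ℝ := 2 * A - CE p q - CE q p

/-- Linear fusion of two unigram language models with weight `l`. -/
noncomputable def mix (l : ℝ) (p q : ℝ × ℝ) : ℝ × ℝ :=
  (l * p.1 + (1 - l) * q.1, l * p.2 + (1 - l) * q.2)

/-- With λ₁ = ε, the symmetric cross-entropy dissimilarity between advertiser 1's
sponsored answer and the organic answer satisfies
CE(p₁ˢ‖p_o) + CE(p_o‖p₁ˢ) + 2·log ε + log 2 → 0 as ε → 0⁺. -/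
theorem ad1_user_utility_asymptotics :
    Filter.Tendsto
      (fun ε : ℝ =>
        CE (mix ε (1 - ε, ε) (ε, 1 - ε)) (1 - ε, ε) +
          CE (1 - ε, ε) (mix ε (1 - ε, ε) (ε, 1 - ε)) +
          2 * Real.log ε + Real.log 2)
      (nhdsWithin 0 (Set.Ioi 0)) (nhds 0) := by
  have hc : ContinuousAt (fun ε : ℝ => (3 - 2 * ε) * (ε * Real.log ε) + ε * Real.log 2
      - (2 * ε * (1 - ε) + 1 - ε) * Real.log (1 - ε)
      - ε * Real.log (ε * ε + (1 - ε) * (1 - ε))) 0 := by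
    have h1 : ContinuousAt (fun ε : ℝ => ε * Real.log ε) 0 :=
      Real.continuous_mul_log.continuousAt
    have h2 : ContinuousAt (fun ε : ℝ => Real.log (1 - ε)) 0 :=
      ContinuousAt.log (by fun_prop) (by norm_num)
    have h3 : ContinuousAt (fun ε : ℝ => Real.log (ε * ε + (1 - ε) * (1 - ε))) 0 :=
      ContinuousAt.log (by fun_prop) (by norm_num)
    have h4 : ContinuousAt (fun ε : ℝ => 3 - 2 * ε) 0 := by fun_prop
    have h5 : ContinuousAt (fun ε : ℝ => ε * Real.log 2) 0 := by fun_prop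
    have h6 : ContinuousAt (fun ε : ℝ => 2 * ε * (1 - ε) + 1 - ε) 0 := by fun_prop
    exact (((h4.mul h1).add h5).sub (h6.mul h2)).sub (continuousAt_id.mul h3)
  have ht := hc.tendsto.mono_left (nhdsWithin_le_nhds (s := Set.Ioi (0 : ℝ)))
  simp only [mul_zero, zero_mul, sub_zero, Real.log_one, add_zero] at ht
  refine ht.congr' ?_
  filter_upwards [Ioo_mem_nhdsGT (zero_lt_one : (0 : ℝ) < 1)] with ε hε
  obtain ⟨h0, h1⟩ := hε
  have h1' : (1 - ε) ≠ 0 := by linarith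
  have e1 : ε * (1 - ε) + (1 - ε) * ε = 2 * ε * (1 - ε) := by ring
  have e2 : Real.log (2 * ε * (1 - ε)) = Real.log 2 + Real.log ε + Real.log (1 - ε) := by
    rw [Real.log_mul (by positivity) h1', Real.log_mul (by norm_num) h0.ne']
  simp only [CE, mix]
  rw [e1, e2]
  ring
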